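/- Let T ≥ 1, let V be a vector space over ℝ, let σ : {0,…,T} → ℝ be strictly decreasing with σ_T > 0, let D_0,…,D_{T−1} ∈ V, and let x̂_0, …, x̂_T in V satisfy x̂_{i+1} = (σ_{i+1}/σ_i)·x̂_i + (1 − σ_{i+1}/σ_i)·D_i for all 0 ≤ i < T. Suppose the initial point is x̂_0 = x + σ_0·ε for some x, ε ∈ V, and let the target point be x + σ_T·ε′ for some ε′ ∈ V. Then x̂_T − (x + σ_T·ε′) = Σ_{i=0}^{T−1} λ_i·(D_i − x) + σ_T·(ε − ε′), where λ_i = σ_T/σ_{i+1} − σ_T/σ_i. -/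

import Mathlib

/-!
Fix a reference point `x`. Divided by the current noise level, the residual `y - x` of an iterate
`y` changes in a single Euler step from `s` to `t` by exactly `(t⁻¹ - s⁻¹) • (d - x)`, independently
of `y`. Hence the rescaled residuals telescope along the trajectory, and multiplying by the final
noise level produces the weights `σ T / σ (i + 1) - σ T / σ i`.
-/

section EulerSampler

variable {K V : Type*} [DivisionRing K] [AddCommGroup V] [Module K V]

/-- The Euler step of a first-order diffusion ODE sampler, taking the iterate `y` from noise level
`s` to noise level `t` with denoiser output `d`. -/
def eulerStep (s t : K) (y d : V) : V :=
  (t / s) • y + (1 - t / s) • d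

theorem eulerStep_sub_sub (s t : K) (y d x : V) :
    eulerStep s t (y - x) (d - x) = eulerStep s t y d - x := by
  simp only [eulerStep, smul_sub, sub_smul, one_smul]
  abel

theorem inv_smul_eulerStep (s : K) {t : K} (ht : t ≠ 0) (y d : V) :
    t⁻¹ • eulerStep s t y d = s⁻¹ • y + (t⁻¹ - s⁻¹) • d := by
  have hratio : t⁻¹ * (t / s) = s⁻¹ := by rw [div_eq_mul_inv, inv_mul_cancel_left₀ ht]
  rw [eulerStep, smul_add, smul_smul, smul_smul, mul_sub, mul_one, hratio]

theorem inv_smul_eulerStep_sub (s : K) {t : K} (ht : t ≠ 0) (y d x : V) :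
    t⁻¹ • (eulerStep s t y d - x) = s⁻¹ • (y - x) + (t⁻¹ - s⁻¹) • (d - x) := by
  rw [← eulerStep_sub_sub, inv_smul_eulerStep s ht]

/-- The sequence `xhat` is produced, up to index `n`, by the Euler sampler with noise levels `σ` and
denoiser outputs `D`; the step from `xhat i` to `xhat (i + 1)` uses `D i`. -/
def IsEulerTrajectory (σ : ℕ → K) (D xhat : ℕ → V) (n : ℕ) : Prop :=
  ∀ i < n, xhat (i + 1) = eulerStep (σ i) (σ (i + 1)) (xhat i) (D i)

variable {σ : ℕ → K} {D xhat : ℕ → V} {n : ℕ}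

theorem IsEulerTrajectory.inv_smul_sub_eq_sum_add (h : IsEulerTrajectory σ D xhat n)
    (hσ : ∀ i < n, σ (i + 1) ≠ 0) (x : V) :
    (σ n)⁻¹ • (xhat n - x) =
      ∑ i ∈ Finset.range n, ((σ (i + 1))⁻¹ - (σ i)⁻¹) • (D i - x) + (σ 0)⁻¹ • (xhat 0 - x) := by
  rw [← sub_eq_iff_eq_add, ← Finset.sum_range_sub (fun i ↦ (σ i)⁻¹ • (xhat i - x))]
  refine Finset.sum_congr rfl fun i hi ↦ ?_
  have hin : i < n := Finset.mem_range.mp hi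
  rw [h i hin, inv_smul_eulerStep_sub _ (hσ i hin), add_sub_cancel_left]

theorem IsEulerTrajectory.sub_eq_sum_add (h : IsEulerTrajectory σ D xhat n)
    (hσ : ∀ i ≤ n, σ i ≠ 0) (x : V) :
    xhat n - x =
      ∑ i ∈ Finset.range n, (σ n / σ (i + 1) - σ n / σ i) • (D i - x)
        + (σ n / σ 0) • (xhat 0 - x) := by
  calc
    xhat n - x = σ n • (σ n)⁻¹ • (xhat n - x) := (smul_inv_smul₀ (hσ n le_rfl) _).symm
    _ = σ n • (∑ i ∈ Finset.range n, ((σ (i + 1))⁻¹ - (σ i)⁻¹) • (D i - x)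
          + (σ 0)⁻¹ • (xhat 0 - x)) := by
      rw [h.inv_smul_sub_eq_sum_add fun i hi ↦ hσ (i + 1) hi]
    _ = _ := by simp only [smul_add, Finset.smul_sum, smul_smul, mul_sub, div_eq_mul_inv]

theorem euler_sampler_error_decomposition_general (h : IsEulerTrajectory σ D xhat n)
    (hσ : ∀ i ≤ n, σ i ≠ 0) {x ε : V} (ε' : V) (hinit : xhat 0 = x + σ 0 • ε) :
    xhat n - (x + σ n • ε') =
      ∑ i ∈ Finset.range n, (σ n / σ (i + 1) - σ n / σ i) • (D i - x) + σ n • (ε - ε') := by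
  have hnoise : (σ n / σ 0) • (xhat 0 - x) = σ n • ε := by
    rw [hinit, add_sub_cancel_left, smul_smul, div_mul_cancel₀ _ (hσ 0 n.zero_le)]
  rw [← sub_sub, h.sub_eq_sum_add hσ x, hnoise, add_sub_assoc, ← smul_sub]

end EulerSampler

/-- Decomposition of the discretization error of a first-order diffusion ODE sampler
into a weighted sum of per-step denoising errors plus a noise term. -/
theorem euler_sampler_error_decomposition
    (T : ℕ) (hT : 1 ≤ T) (V : Type*) [AddCommGroup V] [Module ℝ V]
    (σ : ℕ → ℝ)
    (hσ_anti : ∀ i j : ℕ, i < j → j ≤ T → σ j < σ i)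
    (hσT : 0 < σ T)
    (D : ℕ → V) (xhat : ℕ → V)
    (hrec : ∀ i : ℕ, i < T →
      xhat (i + 1) = (σ (i + 1) / σ i) • xhat i + (1 - σ (i + 1) / σ i) • D i)
    (x ε ε' : V)
    (hinit : xhat 0 = x + σ 0 • ε) :
    xhat T - (x + σ T • ε') =
      (∑ i ∈ Finset.range T, (σ T / σ (i + 1) - σ T / σ i) • (D i - x))
        + σ T • (ε - ε') := by
  have hσ_pos : ∀ i ≤ T, 0 < σ i := fun i hi ↦
    hi.eq_or_lt.elim (fun h ↦ h ▸ hσT) fun h ↦ hσT.trans (hσ_anti i T h le_rfl)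
  exact euler_sampler_error_decomposition_general hrec (fun i hi ↦ (hσ_pos i hi).ne') ε' hinit
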